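/- Let c > 0 and α ∈ (0,1), set q_n = 1 − c/n^α, and let (M_n) be a sequence of integers with 0 ≤ M_n ≤ n−1 such that lim_{n→∞} (n − M_n)/n^α = ∞. Then lim_{n→∞} 𝒫_n^{q_n}(S(n,M_n)) = 0. -/

import Mathlib

open Finset Filter

/-- The number of inversions of a permutation of `Fin n`. -/
def invCount (n : ℕ) (σ : Equiv.Perm (Fin n)) : ℕ :=
  (Finset.univ.filter (fun p : Fin n × Fin n => p.1 < p.2 ∧ σ p.2 < σ p.1)).card

/-- Normalization constant of the Mallows distribution:
`Z_n(q) = ∑_{σ ∈ S_n} q^{inv σ}`. -/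
noncomputable def mallowsZ (n : ℕ) (q : ℝ) : ℝ :=
  ∑ σ : Equiv.Perm (Fin n), q ^ invCount n σ

/-- The Mallows probability of a set `A` of permutations:
`P_n^q(A) = (∑_{σ ∈ A} q^{inv σ}) / Z_n(q)`. -/
noncomputable def mallowsProb (n : ℕ) (q : ℝ) (A : Finset (Equiv.Perm (Fin n))) : ℝ :=
  (∑ σ ∈ A, q ^ invCount n σ) / mallowsZ n q

/-- The success event for the strategy `S(n,M)`.  Positions are indexed by `Fin n`
(the index `i : Fin n` represents the `(i+1)`-st arriving item) and ranks are the
values of `σ` (the value `n-1`, i.e. the top of `Fin n`, represents the highest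
rank `n`).  For `M ≥ 1` the strategy succeeds iff for some position `j` with
`(j:ℕ) ≥ M` (i.e. item number `j+1 ≥ M+1`) the item at position `j` has the top
rank and the maximum rank among the items strictly before position `j` equals the
maximum rank among the first `M` items.  For `M = 0` it succeeds iff the first
item has top rank. -/
def winEvent (n M : ℕ) : Finset (Equiv.Perm (Fin n)) :=
  if M = 0 then
    Finset.univ.filter (fun σ => ∀ i : Fin n, (i : ℕ) = 0 → (σ i : ℕ) = n - 1)
  else
    Finset.univ.filter (fun σ => ∃ j : Fin n, M ≤ (j : ℕ) ∧ (σ j : ℕ) = n - 1 ∧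
      (Finset.univ.filter (fun i : Fin n => i < j)).sup (fun i => (σ i : ℕ)) =
      (Finset.univ.filter (fun i : Fin n => (i : ℕ) < M)).sup (fun i => (σ i : ℕ)))

/-- `𝒫_n^q(S(n,M))`, the success probability of the strategy `S(n,M)` under the
Mallows distribution with parameter `q`. -/
noncomputable def succProb (n M : ℕ) (q : ℝ) : ℝ := mallowsProb n q (winEvent n M)

/-- Insert a last value `v` into a permutation. -/
def insLast {n : ℕ} (v : Fin (n+1)) (τ : Equiv.Perm (Fin n)) : Equiv.Perm (Fin (n+1)) :=
  (finSuccEquivLast.trans (Equiv.optionCongr τ)).trans (finSuccEquiv' v).symm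

lemma insLast_castSucc {n : ℕ} (v : Fin (n+1)) (τ : Equiv.Perm (Fin n)) (i : Fin n) :
    insLast v τ i.castSucc = v.succAbove (τ i) := by
  simp [insLast]

lemma insLast_last {n : ℕ} (v : Fin (n+1)) (τ : Equiv.Perm (Fin n)) :
    insLast v τ (Fin.last n) = v := by
  simp [insLast]

lemma insLast_bij (n : ℕ) : Function.Bijective
    (fun p : Fin (n+1) × Equiv.Perm (Fin n) => insLast p.1 p.2) := by
  rw [Fintype.bijective_iff_injective_and_card]
  constructor
  · rintro ⟨v, τ⟩ ⟨w, ρ⟩ h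
    simp only at h
    have hv : v = w := by rw [← insLast_last v τ, h, insLast_last]
    subst hv
    congr 1
    ext i : 1
    have := insLast_castSucc v τ i
    rw [h, insLast_castSucc] at this
    exact (Fin.succAbove_right_injective this).symm
  · simp [Fintype.card_perm, Nat.factorial_succ]

lemma sum_perm_succ (n : ℕ) (f : Equiv.Perm (Fin (n+1)) → ℝ) :
    ∑ σ, f σ = ∑ v : Fin (n+1), ∑ τ : Equiv.Perm (Fin n), f (insLast v τ) := by
  rw [← Fintype.sum_prod_type']
  exact (Function.Bijective.sum_comp (insLast_bij n) f).symm

lemma invCount_eq (n : ℕ) (σ : Equiv.Perm (Fin n)) :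
    invCount n σ = ∑ j : Fin n, ∑ i : Fin n, if i < j ∧ σ j < σ i then 1 else 0 := by
  rw [invCount, Finset.card_filter, Fintype.sum_prod_type_right]

lemma count_above (n : ℕ) (v : Fin (n+1)) :
    (∑ w : Fin n, if v < v.succAbove w then 1 else 0) = n - (v : ℕ) := by
  simp only [Fin.lt_succAbove_iff_le_castSucc, Fin.le_def, Fin.val_castSucc]
  rw [Fin.sum_univ_eq_sum_range (fun w => if (v:ℕ) ≤ w then 1 else 0) n, ← Finset.card_filter]
  have : (Finset.range n).filter (fun w => (v:ℕ) ≤ w) = Finset.Ico (v:ℕ) n := by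
    ext; simp; omega
  rw [this, Nat.card_Ico]

lemma invCount_insLast {n : ℕ} (v : Fin (n+1)) (τ : Equiv.Perm (Fin n)) :
    invCount (n+1) (insLast v τ) = invCount n τ + (n - (v : ℕ)) := by
  rw [invCount_eq, invCount_eq, Fin.sum_univ_castSucc]
  congr 1
  · refine Finset.sum_congr rfl fun j _ => ?_
    rw [Fin.sum_univ_castSucc]
    simp [insLast_castSucc, (Fin.le_last _).not_gt, (Fin.strictMono_succAbove v).lt_iff_lt]
  · rw [Fin.sum_univ_castSucc]
    simp only [insLast_castSucc, insLast_last, lt_irrefl, false_and, if_false, add_zero,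
      Fin.castSucc_lt_last, true_and]
    rw [← count_above n v]
    exact Equiv.sum_comp τ (fun w => if v < v.succAbove w then 1 else 0)

/-- No record from position `M` on. -/
def noRec (n M : ℕ) (σ : Equiv.Perm (Fin n)) : Prop :=
  ∀ i : Fin n, ∃ l : Fin n, (l : ℕ) < M ∧ σ i ≤ σ l

/-- Weak form of the winning event. -/
def winP (n M : ℕ) (σ : Equiv.Perm (Fin n)) : Prop :=
  ∃ j : Fin n, M ≤ (j : ℕ) ∧ (∀ i, σ i ≤ σ j) ∧ ∀ i < j, ∃ l : Fin n, (l : ℕ) < M ∧ σ i ≤ σ l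

lemma winEvent_winP (n M : ℕ) (hMn : M < n) (σ : Equiv.Perm (Fin n)) (h : σ ∈ winEvent n M) :
    winP n M σ := by
  unfold winEvent at h
  split_ifs at h with h0
  · subst h0
    simp only [Finset.mem_filter, Finset.mem_univ, true_and] at h
    have h1 := h ⟨0, hMn⟩ rfl
    refine ⟨⟨0, hMn⟩, by simp, fun i => ?_, fun i hi => ?_⟩
    · rw [Fin.le_def, h1]; have := (σ i).2; omega
    · simp [Fin.lt_def] at hi
  · simp only [Finset.mem_filter, Finset.mem_univ, true_and] at h
    obtain ⟨j, hj, hjn, hs⟩ := h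
    refine ⟨j, hj, fun i => ?_, fun i hi => ?_⟩
    · rw [Fin.le_def, hjn]; have := (σ i).2; omega
    · have hne : (Finset.univ.filter (fun i : Fin n => (i : ℕ) < M)).Nonempty :=
        ⟨⟨0, by omega⟩, by simp; omega⟩
      obtain ⟨l, hl, hl'⟩ := Finset.exists_mem_eq_sup _ hne (fun i => (σ i : ℕ))
      refine ⟨l, by simpa using hl, ?_⟩
      rw [Fin.le_def, ← hl', ← hs]
      exact Finset.le_sup (f := fun i => (σ i : ℕ)) (by simpa using hi)

lemma noRec_step {n M : ℕ} (h : M ≤ n) (v : Fin (n+1)) (τ : Equiv.Perm (Fin n))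
    (H : noRec (n+1) M (insLast v τ)) : v ≠ Fin.last n ∧ noRec n M τ := by
  constructor
  · rintro rfl
    obtain ⟨l, hl, hl'⟩ := H (Fin.last n)
    rw [insLast_last, Fin.last_le_iff] at hl'
    have : l = Fin.last n := (insLast (Fin.last n) τ).injective (by rw [hl', insLast_last])
    subst this
    simp at hl; omega
  · intro i
    obtain ⟨l, hl, hl'⟩ := H i.castSucc
    induction l using Fin.lastCases with
    | last => simp at hl; omega
    | cast l =>
      rw [insLast_castSucc, insLast_castSucc, (Fin.strictMono_succAbove v).le_iff_le] at hl'
      exact ⟨l, by simpa using hl, hl'⟩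

lemma winP_step {n M : ℕ} (h : M ≤ n) (v : Fin (n+1)) (τ : Equiv.Perm (Fin n))
    (H : winP (n+1) M (insLast v τ)) :
    (v = Fin.last n ∧ noRec n M τ) ∨ (v ≠ Fin.last n ∧ winP n M τ) := by
  have key : ∀ i : Fin n, (∃ l : Fin (n+1), (l : ℕ) < M ∧ insLast v τ i.castSucc ≤ insLast v τ l) →
      ∃ l : Fin n, (l : ℕ) < M ∧ τ i ≤ τ l := by
    rintro i ⟨l, hl, hl'⟩
    induction l using Fin.lastCases with
    | last => simp at hl; omega
    | cast l =>
      rw [insLast_castSucc, insLast_castSucc, (Fin.strictMono_succAbove v).le_iff_le] at hl'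
      exact ⟨l, by simpa using hl, hl'⟩
  obtain ⟨j, hj, hmax, hrec⟩ := H
  have htop : insLast v τ j = Fin.last n := by
    have := hmax ((insLast v τ).symm (Fin.last n))
    rwa [Equiv.apply_symm_apply, Fin.last_le_iff] at this
  induction j using Fin.lastCases with
  | last =>
    left
    rw [insLast_last] at htop
    exact ⟨htop, fun i => key i (hrec _ (Fin.castSucc_lt_last i))⟩
  | cast j =>
    right
    refine ⟨?_, j, by simpa using hj, fun i => ?_, fun i hi => key i (hrec _ (by simpa using hi))⟩
    · rintro rfl
      rw [insLast_castSucc] at htop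
      exact Fin.succAbove_ne _ _ htop
    · have := hmax i.castSucc
      rwa [insLast_castSucc, insLast_castSucc, (Fin.strictMono_succAbove v).le_iff_le] at this

/-- `[n]_q` -/
noncomputable def qn (q : ℝ) (n : ℕ) : ℝ := ∑ i ∈ Finset.range n, q ^ i

open Classical in
/-- Weight of an event. -/
noncomputable def wt (n : ℕ) (q : ℝ) (P : Equiv.Perm (Fin n) → Prop) : ℝ :=
  ∑ σ : Equiv.Perm (Fin n), if P σ then q ^ invCount n σ else 0

lemma sum_cast (q : ℝ) (n : ℕ) : ∑ w : Fin n, q ^ (n - (w : ℕ)) = q * qn q n := by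
  rw [Fin.sum_univ_eq_sum_range (fun w => q ^ (n - w)) n, qn, ← Finset.sum_range_reflect,
    Finset.mul_sum]
  refine Finset.sum_congr rfl fun i hi => ?_
  rw [Finset.mem_range] at hi
  rw [← pow_succ']
  congr 1; omega

lemma qn_succ (q : ℝ) (n : ℕ) : qn q (n+1) = q * qn q n + 1 := by
  rw [qn, geom_sum_succ, qn]

lemma wt_succ (n : ℕ) (q : ℝ) (P : Equiv.Perm (Fin (n+1)) → Prop) (A B : Equiv.Perm (Fin n) → Prop)
    (hq : 0 ≤ q) (h : ∀ v τ, P (insLast v τ) → (v = Fin.last n ∧ A τ) ∨ (v ≠ Fin.last n ∧ B τ)) :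
    wt (n+1) q P ≤ wt n q A + q * qn q n * wt n q B := by
  classical
  rw [wt, sum_perm_succ, Fin.sum_univ_castSucc, add_comm, ← sum_cast, Finset.sum_mul]
  gcongr with w
  · rw [wt]
    gcongr with τ
    have := h (Fin.last n) τ
    by_cases hP : P (insLast (Fin.last n) τ)
    · have hA : A τ := by simpa using this hP
      simp [hP, hA, invCount_insLast]
    · rw [if_neg hP]; positivity
  · rw [wt, Finset.mul_sum]
    gcongr with τ
    have := h w.castSucc τ
    by_cases hP : P (insLast w.castSucc τ)
    · have hB : B τ := by simpa [Fin.castSucc_ne_last] using this hP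
      simp [hP, hB, invCount_insLast, pow_add, mul_comm]
    · rw [if_neg hP]; positivity

lemma mallowsZ_succ (n : ℕ) (q : ℝ) : mallowsZ (n+1) q = qn q (n+1) * mallowsZ n q := by
  rw [mallowsZ, sum_perm_succ, Fin.sum_univ_castSucc, qn_succ, ← sum_cast, add_mul, Finset.sum_mul]
  congr 1
  · refine Finset.sum_congr rfl fun w _ => ?_
    rw [mallowsZ, Finset.mul_sum]
    simp [invCount_insLast, pow_add, mul_comm]
  · simp [invCount_insLast, mallowsZ]

lemma mallowsZ_pos (n : ℕ) (q : ℝ) (hq : 0 < q) : 0 < mallowsZ n q :=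
  Finset.sum_pos (fun _ _ => by positivity) Finset.univ_nonempty

lemma qn_nonneg (q : ℝ) (hq : 0 < q) (n : ℕ) : 0 ≤ qn q n :=
  Finset.sum_nonneg fun _ _ => by positivity

lemma wt_noRec (M k : ℕ) (q : ℝ) (hq : 0 < q) :
    wt (M+k) q (noRec (M+k) M) ≤ q ^ k * mallowsZ (M+k) q := by
  classical
  induction k with
  | zero =>
    simp only [add_zero, pow_zero, one_mul, wt, mallowsZ]
    gcongr with σ
    split_ifs
    · rfl
    · positivity
  | succ k ih =>
    have h1 := wt_succ (M+k) q (noRec (M+(k+1)) M) (fun _ => False) (noRec (M+k) M) hq.le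
      (fun v τ H => Or.inr (noRec_step (by omega) v τ H))
    have h2 : wt (M+k) q (fun _ => False) = 0 := by simp [wt]
    have h4 := qn_nonneg q hq (M+k)
    have hz := mallowsZ_pos (M+k) q hq
    have h3 : qn q (M+k) ≤ qn q (M+k+1) := by
      rw [qn, qn, Finset.sum_range_succ]; linarith [pow_pos hq (M+k)]
    rw [h2, zero_add] at h1
    refine h1.trans ?_
    rw [← add_assoc, mallowsZ_succ]
    calc q * qn q (M+k) * wt (M+k) q (noRec (M+k) M)
        ≤ q * qn q (M+k) * (q ^ k * mallowsZ (M+k) q) := by gcongr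
      _ ≤ q * qn q (M+k+1) * (q ^ k * mallowsZ (M+k) q) := by gcongr
      _ = _ := by ring

lemma wt_win (M k : ℕ) (q : ℝ) (hq : 0 < q) :
    q * qn q (M+k) * wt (M+k) q (winP (M+k) M) ≤ k * q ^ k * mallowsZ (M+k) q := by
  classical
  induction k with
  | zero =>
    have : wt (M+0) q (winP (M+0) M) = 0 := by
      rw [wt]
      refine Finset.sum_eq_zero fun σ _ => ?_
      rw [if_neg]
      rintro ⟨j, hj, -⟩
      have := j.2
      omega
    rw [this]; simp
  | succ k ih =>
    have h1 := wt_succ (M+k) q (winP (M+(k+1)) M) (noRec (M+k) M) (winP (M+k) M) hq.le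
      (fun v τ H => winP_step (by omega) v τ H)
    have h2 := wt_noRec M k q hq
    have h4 := qn_nonneg q hq (M+k+1)
    rw [← add_assoc, mallowsZ_succ]
    calc q * qn q (M+k+1) * wt (M+k+1) q (winP (M+k+1) M)
        ≤ q * qn q (M+k+1) * (q ^ k * mallowsZ (M+k) q + k * q ^ k * mallowsZ (M+k) q) := by
          gcongr
          exact h1.trans (add_le_add h2 ih)
      _ = _ := by push_cast; ring

lemma succProb_bound (n M : ℕ) (hMn : M < n) (q : ℝ) (hq : 0 < q) :
    q * qn q n * succProb n M q ≤ (n - M : ℕ) * q ^ (n - M) := by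
  classical
  obtain ⟨k, rfl⟩ := Nat.exists_eq_add_of_le hMn.le
  have h := wt_win M k q hq
  have hz := mallowsZ_pos (M+k) q hq
  have hle : (∑ σ ∈ winEvent (M+k) M, q ^ invCount (M+k) σ) ≤ wt (M+k) q (winP (M+k) M) := by
    rw [wt, ← Finset.sum_filter]
    refine Finset.sum_le_sum_of_subset_of_nonneg (fun σ hσ => ?_) (fun _ _ _ => by positivity)
    simpa using winEvent_winP _ _ hMn σ hσ
  have h4 := qn_nonneg q hq (M+k)
  rw [succProb, mallowsProb, ← mul_div_assoc, div_le_iff₀ hz, Nat.add_sub_cancel_left]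
  refine le_trans ?_ h
  gcongr

lemma succProb_nonneg (n M : ℕ) (q : ℝ) (hq : 0 < q) : 0 ≤ succProb n M q :=
  div_nonneg (Finset.sum_nonneg fun _ _ => by positivity) (mallowsZ_pos n q hq).le

lemma succProb_le (n M : ℕ) (hMn : M < n) (q : ℝ) (hq : 1/2 ≤ q) (hq1 : q < 1) (y : ℝ)
    (hy : y = ((n:ℝ) - M) * (1 - q)) :
    succProb n M q ≤ 2 * (y * Real.exp (-y)) / (1 - Real.exp (-y)) := by
  have hq0 : 0 < q := by linarith
  have hk : (((n - M : ℕ)) : ℝ) = n - M := by rw [Nat.cast_sub hMn.le]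
  have hkpos : (0:ℝ) < n - M := by rw [← hk]; exact_mod_cast Nat.sub_pos_of_lt hMn
  have hypos : 0 < y := by rw [hy]; exact mul_pos hkpos (by linarith)
  have hb := succProb_bound n M hMn q hq0
  have hp := succProb_nonneg n M q hq0
  have he : q ^ (n - M) ≤ Real.exp (-y) := by
    have : q ≤ Real.exp (-(1-q)) := by have := Real.add_one_le_exp (-(1-q)); linarith
    calc q ^ (n-M) ≤ Real.exp (-(1-q)) ^ (n-M) := by gcongr
      _ = Real.exp (-y) := by rw [← Real.exp_nat_mul, hk, hy]; congr 1; ring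
  have hn : q ^ n ≤ q ^ (n - M) := pow_le_pow_of_le_one hq0.le hq1.le (by omega)
  have hg : qn q n * (1 - q) = 1 - q ^ n := by rw [qn, geom_sum_mul_neg]
  have hlt : Real.exp (-y) < 1 := by rw [Real.exp_lt_one_iff]; linarith
  rw [le_div_iff₀ (by linarith)]
  have h1 : q * qn q n * succProb n M q * (1 - q) ≤ y * Real.exp (-y) := by
    calc _ ≤ (n - M : ℕ) * q ^ (n - M) * (1 - q) :=
          mul_le_mul_of_nonneg_right hb (by linarith)
      _ = y * q ^ (n - M) := by rw [hk, hy]; ring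
      _ ≤ _ := by gcongr
  have h2 : q * qn q n * succProb n M q * (1 - q) = q * (succProb n M q * (1 - q ^ n)) := by
    rw [← hg]; ring
  have h3 : succProb n M q * (1 - Real.exp (-y)) ≤ succProb n M q * (1 - q ^ n) := by
    gcongr; linarith
  have h4 : 0 ≤ succProb n M q * (1 - q ^ n) :=
    mul_nonneg hp (by linarith)
  nlinarith

theorem stmt_6 (c α : ℝ) (hc : 0 < c) (hα : α ∈ Set.Ioo (0 : ℝ) 1)
    (M : ℕ → ℕ) (hM : ∀ n, 1 ≤ n → M n ≤ n - 1)
    (hlim : Tendsto (fun n : ℕ => ((n : ℝ) - M n) / (n : ℝ) ^ α) atTop atTop) :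
    Tendsto (fun n : ℕ => succProb n (M n) (1 - c / (n : ℝ) ^ α)) atTop (nhds 0) := by
  have hF : Tendsto (fun y : ℝ => 2 * (y * Real.exp (-y)) / (1 - Real.exp (-y))) atTop (nhds 0) := by
    have h1 : Tendsto (fun y : ℝ => y * Real.exp (-y)) atTop (nhds 0) := by
      simpa using Real.tendsto_pow_mul_exp_neg_atTop_nhds_zero 1
    have h2 : Tendsto (fun y : ℝ => Real.exp (-y)) atTop (nhds 0) :=
      Real.tendsto_exp_neg_atTop_nhds_zero
    have := (h1.const_mul 2).div (h2.const_sub 1) (by norm_num)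
    simp only [mul_zero, zero_div] at this
    exact this
  have hy := hlim.const_mul_atTop hc
  have hpow : Tendsto (fun n : ℕ => (n : ℝ) ^ α) atTop atTop :=
    (tendsto_rpow_atTop hα.1).comp tendsto_natCast_atTop_atTop
  have hcomp := hF.comp hy
  have hev : ∀ᶠ n : ℕ in atTop, 1 ≤ n ∧ 2 * c ≤ (n : ℝ) ^ α :=
    (eventually_ge_atTop 1).and (hpow.eventually_ge_atTop _)
  have hqs : ∀ n : ℕ, 2 * c ≤ (n : ℝ) ^ α →
      1/2 ≤ 1 - c / (n : ℝ) ^ α ∧ 1 - c / (n : ℝ) ^ α < 1 := by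
    intro n h
    have hpos : 0 < (n : ℝ) ^ α := by linarith
    have h1 : c / (n : ℝ) ^ α ≤ 1/2 := by rw [div_le_iff₀ hpos]; linarith
    have h2 : 0 < c / (n : ℝ) ^ α := by positivity
    constructor <;> linarith
  refine tendsto_of_tendsto_of_tendsto_of_le_of_le' tendsto_const_nhds hcomp ?_ ?_
  · filter_upwards [hev] with n hn
    exact succProb_nonneg _ _ _ (by linarith [(hqs n hn.2).1])
  · filter_upwards [hev] with n hn
    have := hM n hn.1
    exact succProb_le n (M n) (by omega) _ (hqs n hn.2).1 (hqs n hn.2).2 _ (by ring)
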